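/- Let X be a metric space, P ⊆ X homeomorphic to [0,1]³ via h, with faces P⁻_ℓ = h({x₃=0}) and P⁻_r = h({x₃=1}). If ψ: P → X is continuous on a compact K ⊆ P and (K, ψ) stretches (P, P⁻) to itself along paths (i.e., every path γ in P joining P⁻_ℓ to P⁻_r has a sub-path σ with values in K such that ψ∘σ stays in P and joins the two faces), then ψ has a fixed point in K. -/

import Mathlib

/-- constant on a unit cell -/
def CellConst (a : ℕ → ℕ → ℕ → ℤ) (i j k : ℕ) : Prop :=
  ∀ p q r : ℕ, p ≤ 1 → q ≤ 1 → r ≤ 1 → a (i+p) (j+q) (k+r) = a i j k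

def gg (a b c : ℕ → ℕ → ℕ → ℤ) (i j k : ℕ) : ℤ :=
  a i j k * ((b i (j+1) k - b i j k) * (c i (j+1) (k+1) - c i (j+1) k)
    - (b i j (k+1) - b i j k) * (c i (j+1) (k+1) - c i j (k+1)))
def gh (a b c : ℕ → ℕ → ℕ → ℤ) (i j k : ℕ) : ℤ :=
  a i j k * ((b i j (k+1) - b i j k) * (c (i+1) j (k+1) - c i j (k+1))
    - (b (i+1) j k - b i j k) * (c (i+1) j (k+1) - c (i+1) j k))
def gi (a b c : ℕ → ℕ → ℕ → ℤ) (i j k : ℕ) : ℤ :=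
  a i j k * ((b (i+1) j k - b i j k) * (c (i+1) (j+1) k - c (i+1) j k)
    - (b i (j+1) k - b i j k) * (c (i+1) (j+1) k - c i (j+1) k))

def tt (a b c : ℕ → ℕ → ℕ → ℤ) (i j k : ℕ) : ℤ :=
  (a (i+1) j k - a i j k) *
    ((b (i+1) (j+1) k - b (i+1) j k) * (c (i+1) (j+1) (k+1) - c (i+1) (j+1) k)
     - (b (i+1) j (k+1) - b (i+1) j k) * (c (i+1) (j+1) (k+1) - c (i+1) j (k+1)))
  + (a i (j+1) k - a i j k) *
    ((b i (j+1) (k+1) - b i (j+1) k) * (c (i+1) (j+1) (k+1) - c i (j+1) (k+1))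
     - (b (i+1) (j+1) k - b i (j+1) k) * (c (i+1) (j+1) (k+1) - c (i+1) (j+1) k))
  + (a i j (k+1) - a i j k) *
    ((b (i+1) j (k+1) - b i j (k+1)) * (c (i+1) (j+1) (k+1) - c (i+1) j (k+1))
     - (b i (j+1) (k+1) - b i j (k+1)) * (c (i+1) (j+1) (k+1) - c i (j+1) (k+1)))

lemma tt_eq (a b c : ℕ → ℕ → ℕ → ℤ) (i j k : ℕ) : tt a b c i j k =
    (gg a b c (i+1) j k - gg a b c i j k) + (gh a b c i (j+1) k - gh a b c i j k)
    + (gi a b c i j (k+1) - gi a b c i j k) := by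
  unfold tt gg gh gi; ring

lemma tt_zero (a b c : ℕ → ℕ → ℕ → ℤ) (i j k : ℕ)
    (h : CellConst a i j k ∨ CellConst b i j k ∨ CellConst c i j k) : tt a b c i j k = 0 := by
  have key : ∀ a : ℕ → ℕ → ℕ → ℤ, CellConst a i j k →
      a (i+1) j k = a i j k ∧ a i (j+1) k = a i j k ∧ a i j (k+1) = a i j k ∧
      a (i+1) (j+1) k = a i j k ∧ a (i+1) j (k+1) = a i j k ∧ a i (j+1) (k+1) = a i j k ∧
      a (i+1) (j+1) (k+1) = a i j k := by
    intro a h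
    exact ⟨h 1 0 0 (by simp) (by simp) (by simp), h 0 1 0 (by simp) (by simp) (by simp),
      h 0 0 1 (by simp) (by simp) (by simp), h 1 1 0 (by simp) (by simp) (by simp),
      h 1 0 1 (by simp) (by simp) (by simp), h 0 1 1 (by simp) (by simp) (by simp),
      h 1 1 1 (by simp) (by simp) (by simp)⟩
  unfold tt
  rcases h with h | h | h
  all_goals
    obtain ⟨h1, h2, h3, h4, h5, h6, h7⟩ := key _ h
    simp [h1, h2, h3, h4, h5, h6, h7]

lemma grid (N : ℕ) (a b c : ℕ → ℕ → ℕ → ℤ)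
    (a0 : ∀ j k, j ≤ N → k ≤ N → a 0 j k = 0) (a1 : ∀ j k, j ≤ N → k ≤ N → a N j k = 1)
    (b0 : ∀ i k, i ≤ N → k ≤ N → b i 0 k = 0) (b1 : ∀ i k, i ≤ N → k ≤ N → b i N k = 1)
    (c0 : ∀ i j, i ≤ N → j ≤ N → c i j 0 = 0) (c1 : ∀ i j, i ≤ N → j ≤ N → c i j N = 1) :
    ∃ i j k, i < N ∧ j < N ∧ k < N ∧ ¬ CellConst a i j k ∧ ¬ CellConst b i j k ∧
      ¬ CellConst c i j k := by
  by_contra hcon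
  push Not at hcon
  have hz : ∑ i ∈ Finset.range N, ∑ j ∈ Finset.range N, ∑ k ∈ Finset.range N, tt a b c i j k = 0 := by
    refine Finset.sum_eq_zero fun i hi => Finset.sum_eq_zero fun j hj => Finset.sum_eq_zero fun k hk => ?_
    apply tt_zero
    have := hcon i j k (Finset.mem_range.1 hi) (Finset.mem_range.1 hj) (Finset.mem_range.1 hk)
    tauto
  simp only [tt_eq, Finset.sum_add_distrib] at hz
  have e3 : ∑ i ∈ Finset.range N, ∑ j ∈ Finset.range N, ∑ k ∈ Finset.range N,
      (gi a b c i j (k+1) - gi a b c i j k) = 0 := by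
    refine Finset.sum_eq_zero fun i hi => Finset.sum_eq_zero fun j hj => ?_
    have hi := Finset.mem_range.1 hi
    have hj := Finset.mem_range.1 hj
    rw [Finset.sum_range_sub (fun k => gi a b c i j k)]
    unfold gi
    rw [c0 _ _ (by omega) (by omega), c0 _ _ (by omega) (by omega), c0 _ _ (by omega) (by omega),
      c1 _ _ (by omega) (by omega), c1 _ _ (by omega) (by omega), c1 _ _ (by omega) (by omega)]
    ring
  have e2 : ∑ i ∈ Finset.range N, ∑ j ∈ Finset.range N, ∑ k ∈ Finset.range N,
      (gh a b c i (j+1) k - gh a b c i j k) = 0 := by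
    refine Finset.sum_eq_zero fun i hi => ?_
    rw [Finset.sum_comm]
    refine Finset.sum_eq_zero fun k hk => ?_
    have hi := Finset.mem_range.1 hi
    have hk := Finset.mem_range.1 hk
    rw [Finset.sum_range_sub (fun j => gh a b c i j k)]
    unfold gh
    rw [b0 _ _ (by omega) (by omega), b0 _ _ (by omega) (by omega), b0 _ _ (by omega) (by omega),
      b1 _ _ (by omega) (by omega), b1 _ _ (by omega) (by omega), b1 _ _ (by omega) (by omega)]
    ring
  have e1 : ∑ i ∈ Finset.range N, ∑ j ∈ Finset.range N, ∑ k ∈ Finset.range N,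
      (gg a b c (i+1) j k - gg a b c i j k) = 1 := by
    rw [Finset.sum_comm]
    have : ∀ j ∈ Finset.range N, ∑ i ∈ Finset.range N, ∑ k ∈ Finset.range N,
      (gg a b c (i+1) j k - gg a b c i j k) = ∑ k ∈ Finset.range N,
        ((b N (j+1) k * (c N (j+1) (k+1) - c N (j+1) k) - b N j k * (c N j (k+1) - c N j k))
        - (b N j (k+1) * (c N (j+1) (k+1) - c N j (k+1)) - b N j k * (c N (j+1) k - c N j k))) := by
      intro j hj
      rw [Finset.sum_comm]
      refine Finset.sum_congr rfl fun k hk => ?_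
      have hj := Finset.mem_range.1 hj
      have hk := Finset.mem_range.1 hk
      rw [Finset.sum_range_sub (fun i => gg a b c i j k)]
      unfold gg
      rw [a0 _ _ (by omega) (by omega), a1 _ _ (by omega) (by omega)]
      ring
    rw [Finset.sum_congr rfl this]
    have f2 : ∑ j ∈ Finset.range N, ∑ k ∈ Finset.range N, (b N j (k+1) * (c N (j+1) (k+1) - c N j (k+1)) - b N j k * (c N (j+1) k - c N j k)) = 0 := by
      refine Finset.sum_eq_zero fun j hj => ?_
      have hj := Finset.mem_range.1 hj
      rw [Finset.sum_range_sub (fun k => b N j k * (c N (j+1) k - c N j k))]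
      rw [c0 _ _ (by omega) (by omega), c0 _ _ (by omega) (by omega),
        c1 _ _ (by omega) (by omega), c1 _ _ (by omega) (by omega)]
      ring
    have f1 : ∑ j ∈ Finset.range N, ∑ k ∈ Finset.range N, (b N (j+1) k * (c N (j+1) (k+1) - c N (j+1) k) - b N j k * (c N j (k+1) - c N j k)) = 1 := by
      rw [Finset.sum_comm]
      have : ∀ k ∈ Finset.range N, ∑ j ∈ Finset.range N, (b N (j+1) k * (c N (j+1) (k+1) - c N (j+1) k) - b N j k * (c N j (k+1) - c N j k)) = c N N (k+1) - c N N k := by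
        intro k hk
        have hk := Finset.mem_range.1 hk
        rw [Finset.sum_range_sub (fun j => b N j k * (c N j (k+1) - c N j k)),
          b0 _ _ (by omega) (by omega), b1 _ _ (by omega) (by omega)]
        ring
      rw [Finset.sum_congr rfl this, Finset.sum_range_sub (fun k => c N N k), c0 _ _ le_rfl le_rfl,
        c1 _ _ le_rfl le_rfl]
      ring
    have := Finset.sum_sub_distrib (s := Finset.range N) (f := fun j => ∑ k ∈ Finset.range N, (b N (j+1) k * (c N (j+1) (k+1) - c N (j+1) k) - b N j k * (c N j (k+1) - c N j k))) (g := fun j => ∑ k ∈ Finset.range N, (b N j (k+1) * (c N (j+1) (k+1) - c N j (k+1)) - b N j k * (c N (j+1) k - c N j k)))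
    rw [f1, f2] at this
    rw [← sub_zero (1:ℤ), ← this]
    refine Finset.sum_congr rfl fun j _ => ?_
    rw [Finset.sum_sub_distrib]
  omega

/-- the unit cube -/
abbrev QQ : Set (ℝ × ℝ × ℝ) := Set.Icc (0:ℝ) 1 ×ˢ Set.Icc (0:ℝ) 1 ×ˢ Set.Icc (0:ℝ) 1

/-- grid points -/
noncomputable def pt (N i j k : ℕ) : ℝ × ℝ × ℝ := ((i:ℝ)/N, (j:ℝ)/N, (k:ℝ)/N)

lemma pt_mem {N i j k : ℕ} (hi : i ≤ N) (hj : j ≤ N) (hk : k ≤ N) : pt N i j k ∈ QQ := by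
  have key : ∀ i : ℕ, i ≤ N → (i:ℝ)/N ∈ Set.Icc (0:ℝ) 1 := fun i hi =>
    ⟨by positivity, div_le_one_of_le₀ (by exact_mod_cast hi) (by positivity)⟩
  exact ⟨key i hi, key j hj, key k hk⟩

lemma pt_dist {N i j k p q r : ℕ} (hp : p ≤ 1) (hq : q ≤ 1) (hr : r ≤ 1) :
    dist (pt N (i+p) (j+q) (k+r)) (pt N i j k) ≤ 1 / N := by
  have key : ∀ i p : ℕ, p ≤ 1 → dist (((i+p : ℕ):ℝ)/N) ((i:ℝ)/N) ≤ 1 / N := by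
    intro i p hp
    rw [Real.dist_eq, ← sub_div]
    push_cast
    rw [add_sub_cancel_left, abs_of_nonneg (by positivity)]
    gcongr
    exact_mod_cast hp
  simp only [pt, Prod.dist_eq]
  exact max_le (key _ _ hp) (max_le (key _ _ hq) (key _ _ hr))

open Classical in
lemma cell_small (N : ℕ) (F : ℝ × ℝ × ℝ → ℝ) (S : ℕ → ℕ → ℕ → Prop)
    (hS : ∀ i j k, i ≤ N → j ≤ N → k ≤ N → S i j k → 0 ≤ F (pt N i j k))
    (hS' : ∀ i j k, i ≤ N → j ≤ N → k ≤ N → ¬ S i j k → F (pt N i j k) ≤ 0)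
    (ε δ : ℝ) (hδ : ∀ x ∈ QQ, ∀ y ∈ QQ, dist x y < δ → dist (F x) (F y) < ε)
    (hN : 1 / (N:ℝ) < δ) (i j k : ℕ) (hi : i < N) (hj : j < N) (hk : k < N)
    (hc : ¬ CellConst (fun i j k => if S i j k then 1 else 0) i j k) :
    |F (pt N i j k)| < ε := by
  unfold CellConst at hc
  push Not at hc
  obtain ⟨p, q, r, hp, hq, hr, hne⟩ := hc
  have hd := hδ _ (pt_mem (N := N) (i := i+p) (j := j+q) (k := k+r) (by omega) (by omega) (by omega)) _
    (pt_mem (N := N) (i := i) (j := j) (k := k) (by omega) (by omega) (by omega))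
    ((pt_dist hp hq hr).trans_lt hN)
  rw [Real.dist_eq, abs_lt] at hd
  by_cases h1 : S i j k <;> by_cases h2 : S (i+p) (j+q) (k+r)
  · simp [h1, h2] at hne
  · have := hS _ _ _ hi.le hj.le hk.le h1
    have := hS' _ _ _ (by omega) (by omega) (by omega) h2
    rw [abs_lt]; constructor <;> linarith
  · have := hS' _ _ _ hi.le hj.le hk.le h1
    have := hS _ _ _ (by omega) (by omega) (by omega) h2
    rw [abs_lt]; constructor <;> linarith
  · simp [h1, h2] at hne

lemma QQ_compact : IsCompact QQ := isCompact_Icc.prod (isCompact_Icc.prod isCompact_Icc)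

lemma poincare_miranda (F G H : ℝ × ℝ × ℝ → ℝ) (hF : ContinuousOn F QQ) (hG : ContinuousOn G QQ)
    (hH : ContinuousOn H QQ)
    (F0 : ∀ x ∈ QQ, x.1 = 0 → F x ≤ 0) (F1 : ∀ x ∈ QQ, x.1 = 1 → 0 ≤ F x)
    (G0 : ∀ x ∈ QQ, x.2.1 = 0 → G x ≤ 0) (G1 : ∀ x ∈ QQ, x.2.1 = 1 → 0 ≤ G x)
    (H0 : ∀ x ∈ QQ, x.2.2 = 0 → H x ≤ 0) (H1 : ∀ x ∈ QQ, x.2.2 = 1 → 0 ≤ H x) :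
    ∃ x ∈ QQ, F x = 0 ∧ G x = 0 ∧ H x = 0 := by
  classical
  have small : ∀ ε > 0, ∃ x ∈ QQ, |F x| < ε ∧ |G x| < ε ∧ |H x| < ε := by
    intro ε hε
    obtain ⟨d1, hd1, u1⟩ := Metric.uniformContinuousOn_iff.1
      (QQ_compact.uniformContinuousOn_of_continuous hF) ε hε
    obtain ⟨d2, hd2, u2⟩ := Metric.uniformContinuousOn_iff.1
      (QQ_compact.uniformContinuousOn_of_continuous hG) ε hε
    obtain ⟨d3, hd3, u3⟩ := Metric.uniformContinuousOn_iff.1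
      (QQ_compact.uniformContinuousOn_of_continuous hH) ε hε
    obtain ⟨n, hn⟩ := exists_nat_one_div_lt (lt_min hd1 (lt_min hd2 hd3))
    obtain ⟨N, hN⟩ : ∃ N, N = n + 1 := ⟨_, rfl⟩
    have hN' : 1 / (N:ℝ) < min d1 (min d2 d3) := by rw [hN]; exact_mod_cast hn
    have hN0 : (N:ℝ) ≠ 0 := by rw [hN]; positivity
    obtain ⟨i, j, k, hi, hj, hk, ha, hb, hc⟩ := grid N
      (fun i j k => if i = N ∨ 0 < F (pt N i j k) then 1 else 0)
      (fun i j k => if j = N ∨ 0 < G (pt N i j k) then 1 else 0)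
      (fun i j k => if k = N ∨ 0 < H (pt N i j k) then 1 else 0)
      (by
        intro j k hj hk
        have := F0 _ (pt_mem (i := 0) (by omega) hj hk) (by simp [pt])
        rw [if_neg]; rintro (h | h)
        · omega
        · linarith)
      (by intros; simp)
      (by
        intro j k hj hk
        have := G0 _ (pt_mem (j := 0) hj (by omega) hk) (by simp [pt])
        rw [if_neg]; rintro (h | h)
        · omega
        · linarith)
      (by intros; simp)
      (by
        intro j k hj hk
        have := H0 _ (pt_mem (k := 0) hj hk (by omega)) (by simp [pt])
        rw [if_neg]; rintro (h | h)
        · omega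
        · linarith)
      (by intros; simp)
    refine ⟨pt N i j k, pt_mem hi.le hj.le hk.le, ?_, ?_, ?_⟩
    · refine cell_small N F (fun i j k => i = N ∨ 0 < F (pt N i j k)) ?_ ?_ ε d1 u1
        (hN'.trans_le (min_le_left _ _)) i j k hi hj hk (by convert ha)
      · rintro i j k hi hj hk (h | h)
        · exact F1 _ (pt_mem hi hj hk) (by simp [pt, h, hN0])
        · exact h.le
      · intro i j k hi hj hk h
        push Not at h
        exact h.2
    · refine cell_small N G (fun i j k => j = N ∨ 0 < G (pt N i j k)) ?_ ?_ ε d2 u2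
        (hN'.trans_le ((min_le_right _ _).trans (min_le_left _ _))) i j k hi hj hk (by convert hb)
      · rintro i j k hi hj hk (h | h)
        · exact G1 _ (pt_mem hi hj hk) (by simp [pt, h, hN0])
        · exact h.le
      · intro i j k hi hj hk h
        push Not at h
        exact h.2
    · refine cell_small N H (fun i j k => k = N ∨ 0 < H (pt N i j k)) ?_ ?_ ε d3 u3
        (hN'.trans_le ((min_le_right _ _).trans (min_le_right _ _))) i j k hi hj hk (by convert hc)
      · rintro i j k hi hj hk (h | h)
        · exact H1 _ (pt_mem hi hj hk) (by simp [pt, h, hN0])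
        · exact h.le
      · intro i j k hi hj hk h
        push Not at h
        exact h.2
  have hne : QQ.Nonempty := ⟨(0,0,0), by simp⟩
  obtain ⟨x, hx, hmin⟩ := QQ_compact.exists_isMinOn hne ((hF.abs.add hG.abs).add hH.abs)
  have hx0 : |F x| + |G x| + |H x| ≤ 0 := by
    by_contra hpos
    push Not at hpos
    obtain ⟨y, hy, h1, h2, h3⟩ := small ((|F x| + |G x| + |H x|) / 3) (by linarith)
    have := hmin hy
    change |F x| + |G x| + |H x| ≤ |F y| + |G y| + |H y| at this
    linarith
  have a1 := abs_nonneg (F x)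
  have a2 := abs_nonneg (G x)
  have a3 := abs_nonneg (H x)
  exact ⟨x, hx, abs_eq_zero.1 (by linarith), abs_eq_zero.1 (by linarith), abs_eq_zero.1 (by linarith)⟩

lemma QQ_convex : Convex ℝ QQ :=
  (convex_Icc _ _).prod ((convex_Icc _ _).prod (convex_Icc _ _))

lemma tietze (W : Set (ℝ × ℝ × ℝ)) (hW : IsClosed W) (f : ℝ × ℝ × ℝ → ℝ) (hf : ContinuousOn f W)
    (hf' : ∀ x ∈ W, f x ∈ Set.Icc (0:ℝ) 1) :
    ∃ g : ℝ × ℝ × ℝ → ℝ, Continuous g ∧ (∀ x, g x ∈ Set.Icc (0:ℝ) 1) ∧ ∀ x ∈ W, g x = f x := by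
  obtain ⟨g, hg, hr⟩ := ContinuousMap.exists_restrict_eq_forall_mem_of_closed
    (⟨W.restrict f, hf.restrict⟩ : C(W, ℝ)) (t := Set.Icc (0:ℝ) 1) (fun x => hf' x x.2) ⟨0, by simp⟩ hW
  refine ⟨g, g.continuous, hg, fun x hx => ?_⟩
  exact DFunLike.congr_fun hr ⟨x, hx⟩

/-- A closed set meeting all paths from bottom to top is the zero set of a signed function. -/
lemma separating (V : Set (ℝ × ℝ × ℝ)) (hV : IsClosed V)
    (hsep : ∀ γ : ℝ → ℝ × ℝ × ℝ, Continuous γ → (∀ t, γ t ∈ QQ) → (γ 0).2.2 = 0 → (γ 1).2.2 = 1 →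
      ∃ t, γ t ∈ V) :
    ∃ f : ℝ × ℝ × ℝ → ℝ, ContinuousOn f QQ ∧ (∀ x ∈ QQ, x.2.2 = 0 → f x ≤ 0) ∧
      (∀ x ∈ QQ, x.2.2 = 1 → 0 ≤ f x) ∧ ∀ x ∈ QQ, f x = 0 → x ∈ V := by
  classical
  have sepJ : ∀ x y, x.2.2 = 0 → y.2.2 = 1 → ¬ JoinedIn (QQ \ V) x y := by
    rintro x y hx hy ⟨γ, hγ⟩
    have hm : ∀ t, γ.extend t ∈ QQ \ V := fun t => hγ _
    obtain ⟨t, ht⟩ := hsep γ.extend γ.extend.continuous (fun t => (hm t).1) (by simpa using hx)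
      (by simpa using hy)
    exact (hm t).2 ht
  have hVne : V.Nonempty := by
    by_contra hne
    rw [Set.not_nonempty_iff_eq_empty] at hne
    refine sepJ (0,0,0) (0,0,1) rfl rfl (JoinedIn.of_segment_subset ?_)
    rw [hne, Set.diff_empty]
    exact QQ_convex.segment_subset (by simp) (by simp)
  set A : Set (ℝ × ℝ × ℝ) := {x | ∃ b, b.2.2 = 0 ∧ JoinedIn (QQ \ V) b x} with hA
  have hseg : ∀ x ∈ QQ, ∀ y ∈ QQ, x ∈ A → y ∉ A → Metric.infDist x V + Metric.infDist y V ≤ dist x y := by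
    rintro x hx y hy ⟨b, hb, hj⟩ hyA
    have : ∃ z ∈ segment ℝ x y, z ∈ V := by
      by_contra hcon
      push Not at hcon
      exact hyA ⟨b, hb, hj.trans (JoinedIn.of_segment_subset fun z hz =>
        ⟨QQ_convex.segment_subset hx hy hz, hcon z hz⟩)⟩
    obtain ⟨z, hz, hzV⟩ := this
    rw [← dist_add_dist_of_mem_segment hz, dist_comm z y]
    exact add_le_add (Metric.infDist_le_dist_of_mem hzV) (Metric.infDist_le_dist_of_mem hzV)
  refine ⟨fun x => if x ∈ A then - Metric.infDist x V else Metric.infDist x V, ?_, ?_, ?_, ?_⟩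
  · refine LipschitzOnWith.continuousOn (K := 1) (LipschitzOnWith.of_dist_le_mul fun x hx y hy => ?_)
    have n1 := Metric.infDist_nonneg (x := x) (s := V)
    have n2 := Metric.infDist_nonneg (x := y) (s := V)
    have l1 := Metric.infDist_le_infDist_add_dist (s := V) (x := x) (y := y)
    have l2 := Metric.infDist_le_infDist_add_dist (s := V) (x := y) (y := x)
    rw [dist_comm y x] at l2
    rw [NNReal.coe_one, one_mul, Real.dist_eq, abs_le]
    by_cases h1 : x ∈ A <;> by_cases h2 : y ∈ A
    · simp only [h1, h2, if_true]; constructor <;> linarith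
    · have := hseg x hx y hy h1 h2
      simp only [h1, h2, if_true, if_false]; constructor <;> linarith
    · have := hseg y hy x hx h2 h1
      rw [dist_comm y x] at this
      simp only [h1, h2, if_true, if_false]; constructor <;> linarith
    · simp only [h1, h2, if_false]; constructor <;> linarith
  · intro x hx h0
    have n1 := Metric.infDist_nonneg (x := x) (s := V)
    by_cases h1 : x ∈ A
    · simp only [h1, if_true]; linarith
    · simp only [h1, if_false]
      by_cases hxV : x ∈ V
      · exact (Metric.infDist_zero_of_mem hxV).le
      · exact absurd ⟨x, h0, JoinedIn.refl ⟨hx, hxV⟩⟩ h1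
  · intro x hx h0
    have n1 := Metric.infDist_nonneg (x := x) (s := V)
    have h1 : x ∉ A := fun ⟨b, hb, hj⟩ => sepJ b x hb h0 hj
    simp only [h1, if_false]; exact n1
  · intro x hx h0
    rw [hV.mem_iff_infDist_zero hVne]
    by_cases h1 : x ∈ A
    · simp only [h1, if_true] at h0; linarith
    · simpa only [h1, if_false] using h0

lemma core (W : Set (ℝ × ℝ × ℝ)) (hW : IsClosed W) (hWQ : W ⊆ QQ)
    (Φ : ℝ × ℝ × ℝ → ℝ × ℝ × ℝ) (hΦ : ContinuousOn Φ W) (hΦQ : ∀ x ∈ W, Φ x ∈ QQ)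
    (stretch : ∀ γ : ℝ → ℝ × ℝ × ℝ, Continuous γ → (∀ t, γ t ∈ QQ) → (γ 0).2.2 = 0 →
      (γ 1).2.2 = 1 → ∃ t' t'' : ℝ, t' ≤ t'' ∧ (∀ t ∈ Set.Icc t' t'', γ t ∈ W) ∧
        (((Φ (γ t')).2.2 = 0 ∧ (Φ (γ t'')).2.2 = 1) ∨ ((Φ (γ t')).2.2 = 1 ∧ (Φ (γ t'')).2.2 = 0))) :
    ∃ x ∈ W, Φ x = x := by
  have hc : ContinuousOn (fun x => (Φ x).2.2 - x.2.2) W := by fun_prop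
  obtain ⟨f, hf, f0, f1, fV⟩ := separating (W ∩ (fun x => (Φ x).2.2 - x.2.2) ⁻¹' {0})
    (hc.preimage_isClosed_of_isClosed hW isClosed_singleton) (by
      intro γ hγ hQ h0 h1
      obtain ⟨s, t, hst, hm, hor⟩ := stretch γ hγ hQ h0 h1
      have hg : ContinuousOn (fun u => (Φ (γ u)).2.2 - (γ u).2.2) (Set.Icc s t) :=
        hc.comp (f := γ) hγ.continuousOn hm
      have bs := (hQ s).2.2
      have bt := (hQ t).2.2
      rw [Set.mem_Icc] at bs bt
      rcases hor with ⟨e1, e2⟩ | ⟨e1, e2⟩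
      · obtain ⟨u, hu, hu'⟩ := intermediate_value_Icc hst hg
          (show (0:ℝ) ∈ Set.Icc _ _ from ⟨by linarith, by linarith⟩)
        exact ⟨u, hm u hu, hu'⟩
      · obtain ⟨u, hu, hu'⟩ := intermediate_value_Icc' hst hg
          (show (0:ℝ) ∈ Set.Icc _ _ from ⟨by linarith, by linarith⟩)
        exact ⟨u, hm u hu, hu'⟩)
  obtain ⟨g1, cg1, bg1, eg1⟩ := tietze W hW (fun x => (Φ x).1) (by fun_prop) (fun x hx => (hΦQ x hx).1)
  obtain ⟨g2, cg2, bg2, eg2⟩ := tietze W hW (fun x => (Φ x).2.1) (by fun_prop)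
    (fun x hx => (hΦQ x hx).2.1)
  obtain ⟨x, hx, z1, z2, z3⟩ := poincare_miranda (fun x => x.1 - g1 x) (fun x => x.2.1 - g2 x) f
    (by fun_prop) (by fun_prop) hf
    (fun x _ h => by have := (bg1 x).1; linarith)
    (fun x _ h => by have := (bg1 x).2; linarith)
    (fun x _ h => by have := (bg2 x).1; linarith)
    (fun x _ h => by have := (bg2 x).2; linarith) f0 f1
  obtain ⟨hxW, hx3⟩ := fV x hx z3
  have hx3' : (Φ x).2.2 - x.2.2 = 0 := hx3
  have q1 := eg1 x hxW
  have q2 := eg2 x hxW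
  exact ⟨x, hxW, Prod.ext (by linarith) (Prod.ext (by linarith) (by linarith))⟩

/-- Fixed point theorem for the "Stretching Along the Paths" property in dimension 3
(Theorem 2.2 of the paper). -/
theorem stmt_19 {X : Type*} [MetricSpace X] (P : Set X)
    (h : ((Set.Icc (0:ℝ) 1 ×ˢ Set.Icc (0:ℝ) 1 ×ˢ Set.Icc (0:ℝ) 1 :
        Set (ℝ × ℝ × ℝ))) ≃ₜ P)
    (Pl Pr : Set X)
    (hPl : Pl = {x : X | ∃ q : (Set.Icc (0:ℝ) 1 ×ˢ Set.Icc (0:ℝ) 1 ×ˢ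
        Set.Icc (0:ℝ) 1 : Set (ℝ × ℝ × ℝ)), (q : ℝ × ℝ × ℝ).2.2 = 0 ∧ (h q : X) = x})
    (hPr : Pr = {x : X | ∃ q : (Set.Icc (0:ℝ) 1 ×ˢ Set.Icc (0:ℝ) 1 ×ˢ
        Set.Icc (0:ℝ) 1 : Set (ℝ × ℝ × ℝ)), (q : ℝ × ℝ × ℝ).2.2 = 1 ∧ (h q : X) = x})
    (ψ : X → X) (K : Set X) (hKc : IsCompact K) (hKP : K ⊆ P)
    (hψ : ContinuousOn ψ K)
    (stretch : ∀ γ : ℝ → X, ContinuousOn γ (Set.Icc 0 1) →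
      (∀ t ∈ Set.Icc (0:ℝ) 1, γ t ∈ P) → γ 0 ∈ Pl → γ 1 ∈ Pr →
      ∃ t' t'' : ℝ, t' ∈ Set.Icc (0:ℝ) 1 ∧ t'' ∈ Set.Icc (0:ℝ) 1 ∧ t' ≤ t'' ∧
        (∀ t ∈ Set.Icc t' t'', γ t ∈ K ∧ ψ (γ t) ∈ P) ∧
        ((ψ (γ t') ∈ Pl ∧ ψ (γ t'') ∈ Pr) ∨ (ψ (γ t') ∈ Pr ∧ ψ (γ t'') ∈ Pl))) :
    ∃ z ∈ K, ψ z = z := by 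
  classical
  have hPc : IsCompact P := by
    haveI : CompactSpace QQ := isCompact_iff_compactSpace.1 QQ_compact
    haveI : CompactSpace P := h.compactSpace
    exact isCompact_iff_compactSpace.2 inferInstance
  let hq : QQ → X := fun q => (h q : X)
  have hqc : Continuous hq := continuous_subtype_val.comp h.continuous
  have ql : ∀ q : QQ, hq q ∈ Pl ↔ (q : ℝ × ℝ × ℝ).2.2 = 0 := by
    intro q
    rw [hPl]
    constructor
    · rintro ⟨q', h0, e⟩
      have : q' = q := h.injective (Subtype.ext e)
      rwa [← this]
    · intro h0; exact ⟨q, h0, rfl⟩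
  have qr : ∀ q : QQ, hq q ∈ Pr ↔ (q : ℝ × ℝ × ℝ).2.2 = 1 := by
    intro q
    rw [hPr]
    constructor
    · rintro ⟨q', h0, e⟩
      have : q' = q := h.injective (Subtype.ext e)
      rwa [← this]
    · intro h0; exact ⟨q, h0, rfl⟩
  have hKW : IsClosed (K ∩ ψ ⁻¹' P) :=
    hψ.preimage_isClosed_of_isClosed hKc.isClosed hPc.isClosed
  let W' : Set QQ := hq ⁻¹' (K ∩ ψ ⁻¹' P)
  have hW' : IsClosed W' := hKW.preimage hqc
  let W : Set (ℝ × ℝ × ℝ) := Subtype.val '' W'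
  have hW : IsClosed W := QQ_compact.isClosed.isClosedEmbedding_subtypeVal.isClosedMap _ hW'
  have hWQ : W ⊆ QQ := by rintro _ ⟨q, _, rfl⟩; exact q.2
  have hWmem : ∀ q : QQ, (q : ℝ × ℝ × ℝ) ∈ W ↔ hq q ∈ K ∧ ψ (hq q) ∈ P := by
    intro q
    constructor
    · rintro ⟨q', hq', e⟩
      rw [← Subtype.ext e]; exact hq'
    · intro hh; exact ⟨q, hh, rfl⟩
  let Φ : ℝ × ℝ × ℝ → ℝ × ℝ × ℝ := fun x =>
    if hx : ∃ hx : x ∈ QQ, ψ (hq ⟨x, hx⟩) ∈ P then (h.symm ⟨ψ (hq ⟨x, hx.1⟩), hx.2⟩ : QQ) else 0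
  have Φeq : ∀ (q : QQ) (hP : ψ (hq q) ∈ P), Φ q = (h.symm ⟨ψ (hq q), hP⟩ : QQ) := by
    intro q hP
    have : ∃ hx : (q : ℝ × ℝ × ℝ) ∈ QQ, ψ (hq ⟨q, hx⟩) ∈ P := ⟨q.2, hP⟩
    simp only [Φ, dif_pos this]
  have Φh : ∀ (q : QQ) (hP : ψ (hq q) ∈ P), ∃ q' : QQ, (q' : ℝ × ℝ × ℝ) = Φ q ∧ hq q' = ψ (hq q) := by
    intro q hP
    refine ⟨h.symm ⟨ψ (hq q), hP⟩, (Φeq q hP).symm, ?_⟩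
    simp only [hq, h.apply_symm_apply]
  have hΦ : ContinuousOn Φ W := by
    rw [continuousOn_iff_continuous_restrict]
    have hm : ∀ x : W, hq ⟨x, hWQ x.2⟩ ∈ K ∧ ψ (hq ⟨x, hWQ x.2⟩) ∈ P := fun x =>
      (hWmem ⟨x, hWQ x.2⟩).1 x.2
    have c1 : Continuous (fun x : W => hq ⟨x, hWQ x.2⟩) :=
      hqc.comp (continuous_subtype_val.subtype_mk _)
    have c2 : Continuous (fun x : W => ψ (hq ⟨x, hWQ x.2⟩)) :=
      hψ.comp_continuous c1 (fun x => (hm x).1)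
    have c3 : Continuous (fun x : W => ((h.symm ⟨ψ (hq ⟨x, hWQ x.2⟩), (hm x).2⟩ : QQ) : ℝ × ℝ × ℝ)) :=
      continuous_subtype_val.comp (h.symm.continuous.comp (c2.subtype_mk _))
    refine c3.congr fun x => ?_
    exact (Φeq ⟨x, hWQ x.2⟩ (hm x).2).symm
  have hΦQ : ∀ x ∈ W, Φ x ∈ QQ := by
    intro x hx
    obtain ⟨q', e, _⟩ := Φh ⟨x, hWQ hx⟩ ((hWmem ⟨x, hWQ hx⟩).1 hx).2
    dsimp only at e
    rw [← e]; exact q'.2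
  obtain ⟨x, hx, hfix⟩ := core W hW hWQ Φ hΦ hΦQ (by
    intro γ hγ hQ h0 h1
    obtain ⟨s, t, hs, ht, hst, hm, hor⟩ := stretch (fun u => hq ⟨γ u, hQ u⟩)
      (hqc.comp (hγ.subtype_mk _)).continuousOn (fun u _ => (h _).2) ((ql _).2 h0) ((qr _).2 h1)
    refine ⟨s, t, hst, fun u hu => (hWmem ⟨γ u, hQ u⟩).2 (hm u hu), ?_⟩
    obtain ⟨q1, e1, e1'⟩ := Φh ⟨γ s, hQ s⟩ (hm s ⟨le_rfl, hst⟩).2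
    obtain ⟨q2, e2, e2'⟩ := Φh ⟨γ t, hQ t⟩ (hm t ⟨hst, le_rfl⟩).2
    dsimp only at e1 e2 hor
    rw [← e1', ← e2', ql, qr, ql, qr, e1, e2] at hor
    exact hor)
  have hxm := (hWmem ⟨x, hWQ hx⟩).1 hx
  obtain ⟨q', e, e'⟩ := Φh ⟨x, hWQ hx⟩ hxm.2
  refine ⟨hq ⟨x, hWQ hx⟩, hxm.1, ?_⟩
  rw [← e']
  congr 1
  exact Subtype.ext (e.trans hfix)
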